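/- Let W = F_{q^4} × F_{q^4} and let U be an F_q-subspace of W with dim_{F_q} U = 4 such that the maximum field of linearity of L_U is F_q, i.e., for every divisor e of 4 with e > 1 there is no F_{q^e}-subspace U' of W with L_{U'} = L_U. Let ⊥' denote the orthogonal complement with respect to the nondegenerate alternating F_q-bilinear form η'((x,y),(u,v)) = Tr_{q^4/q}(xv − yu) on W viewed as an 8-dimensional F_q-vector space. If V is an F_q-subspace of W with L_V = L_U, then there exists μ ∈ F_{q^4}, μ ≠ 0, such that V = μ·U or V = μ·(U^{⊥'}). -/

import Mathlib

/-- The `F_q`-linear set of PG(1,q^n) defined by a set `S ⊆ F × F`: the set of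
one-dimensional `F`-subspaces spanned by the nonzero vectors of `S`. -/
def linSet (F : Type) [Field F] (S : Set (F × F)) : Set (Submodule F (F × F)) :=
  {X | ∃ u ∈ S, u ≠ 0 ∧ X = Submodule.span F {u}}

/-!
Move a point outside `L_U` to infinity. Then `U` is the graph of a `q`-polynomial `f`, and
`L_U = L_V` consists of the points of slope `m` for which `f - m` is singular.

If `V` is the graph of a `q`-polynomial `g` as well, the norm forms `det (f + m)` and `det (g + m)`
have the same zeros. As functions of `m` they are `K`-valued polynomials whose coefficients are the
principal minors of the Dickson matrices of `f` and `g`; comparing their `(q - 1)`-st powers shows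
that these minors agree. For `4 × 4` Dickson matrices the principal minors determine the polynomial
up to `x ↦ l⁻¹ f(l x)` and passing to the adjoint, by Hilbert 90. The first replaces `U` by a
multiple, the second by its orthogonal complement.

It remains to see that `V` has rank `4`. Some `3 × 3` minor of the Dickson matrix of `f - m` has
degree `q + 1` in `m` unless `f` only involves `x` and `x^(q²)`, in which case `U` is
`F_{q²}`-linear. So at most `q + 1` points have weight at least `2`, and `L_U` has too many points
for the linear set of a subspace of rank `3`.
-/

open Matrix Module

theorem pow_val_add_of_pow_eq_one {G : Type*} [Monoid G] {n : ℕ} {g : G} (hg : g ^ n = 1)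
    (i j : Fin n) : g ^ ((i + j : Fin n) : ℕ) = g ^ (i : ℕ) * g ^ (j : ℕ) := by
  rw [Fin.val_add, ← pow_eq_pow_mod _ hg, pow_add]

section SigmaPolynomial

variable {K L : Type*} [Field K] [Field L] [Algebra K L] {n : ℕ} (σ : L ≃ₐ[K] L)

/-- The `σ`-polynomial with coefficient vector `a`, that is, the map `x ↦ ∑ aᵢ σⁱ(x)`. For the
`q`-power Frobenius of `F_{qⁿ}` these are the `q`-polynomials. -/
noncomputable def sigmaPolynomial : (Fin n → L) →ₗ[L] L →ₗ[K] L :=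
  Fintype.linearCombination L fun i : Fin n => (σ ^ (i : ℕ)).toLinearMap

theorem sigmaPolynomial_apply (a : Fin n → L) (x : L) :
    sigmaPolynomial σ a x = ∑ i, a i * (σ ^ (i : ℕ)) x := by
  simp [sigmaPolynomial, Fintype.linearCombination_apply, LinearMap.sum_apply]

theorem sigmaPolynomial_single_zero [NeZero n] (m : L) :
    sigmaPolynomial σ (Pi.single (0 : Fin n) m) = LinearMap.mulLeft K m := by
  ext x
  simp [sigmaPolynomial]

variable {σ}

theorem sigmaPolynomial_injective (hσ : orderOf σ = n) :
    Function.Injective (sigmaPolynomial (n := n) σ) := by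
  refine LinearIndependent.fintypeLinearCombination_injective <|
    (linearIndependent_toLinearMap K L L).comp (fun i : Fin n => (σ ^ (i : ℕ) : L ≃ₐ[K] L).toAlgHom)
      fun i j hij => Fin.ext ?_
  exact pow_injOn_Iio_orderOf (hσ ▸ i.2) (hσ ▸ j.2)
    (AlgEquiv.coe_toAlgHom_injective hij)

theorem sigmaPolynomial_surjective [FiniteDimensional K L] (hσ : orderOf σ = n)
    (hn : finrank K L = n) : Function.Surjective (sigmaPolynomial (n := n) σ) := by
  refine (LinearMap.injective_iff_surjective_of_finrank_eq_finrank ?_).1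
    (sigmaPolynomial_injective hσ)
  rw [finrank_fin_fun, finrank_linearMap_self, hn]

variable (σ) in
/-- The Dickson matrix `(σⁱ(a_{j-i}))` of a `σ`-polynomial, whose indices are read modulo `n`. -/
def dicksonMatrix (a : Fin n → L) : Matrix (Fin n) (Fin n) L :=
  .of fun i j => (σ ^ (i : ℕ)) (a (j - i))

theorem dicksonMatrix_apply (a : Fin n → L) (i j : Fin n) :
    dicksonMatrix σ a i j = (σ ^ (i : ℕ)) (a (j - i)) :=
  rfl

theorem dicksonMatrix_single_zero_add [NeZero n] (m : L) (a : Fin n → L) :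
    dicksonMatrix σ (Pi.single 0 m + a) =
      diagonal (fun i : Fin n => (σ ^ (i : ℕ)) m) + dicksonMatrix σ a := by
  ext i j
  obtain rfl | hij := eq_or_ne i j
  · simp [dicksonMatrix_apply]
  · simp [dicksonMatrix_apply, hij, Pi.single_eq_of_ne (sub_ne_zero.2 hij.symm)]

theorem dicksonMatrix_mulVec [NeZero n] (hσ : σ ^ n = 1) (a : Fin n → L) (x : L) :
    (dicksonMatrix σ a *ᵥ fun j => (σ ^ (j : ℕ)) x) =
      fun i : Fin n => (σ ^ (i : ℕ)) (sigmaPolynomial σ a x) := by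
  ext i
  rw [mulVec, dotProduct, ← Equiv.sum_comp (Equiv.addLeft i), sigmaPolynomial_apply, map_sum]
  simp [dicksonMatrix_apply, pow_val_add_of_pow_eq_one hσ, -AlgEquiv.coe_pow]

/-- The two determinants agree because `x ↦ (σⁱ(x))` embeds `L` as a `K`-form of `Lⁿ` on which the
Dickson matrix acts as the `σ`-polynomial. -/
theorem det_dicksonMatrix [NeZero n] (hσ : orderOf σ = n) (hn : finrank K L = n) (a : Fin n → L) :
    (dicksonMatrix σ a).det = algebraMap K L (LinearMap.det (sigmaPolynomial σ a)) := by
  have : FiniteDimensional K L := .of_finrank_pos (hn ▸ NeZero.pos n)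
  let b : Basis (Fin n) K L := finBasisOfFinrankEq K L hn
  let f := sigmaPolynomial σ a
  let B : Matrix (Fin n) (Fin n) L := .of fun i j => (σ ^ (i : ℕ)) (b j)
  have hB : B.det ≠ 0 := by
    rw [Ne, ← exists_vecMul_eq_zero_iff]
    rintro ⟨v, hv, hvB⟩
    refine hv (sigmaPolynomial_injective hσ ((b.ext fun j => ?_).trans (map_zero _).symm))
    simpa [B, vecMul, dotProduct, sigmaPolynomial_apply] using congrFun hvB j
  have hcomm : dicksonMatrix σ a * B = B * (LinearMap.toMatrix b b f).map (algebraMap K L) := by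
    ext i k
    have hfb : f (b k) = ∑ l, LinearMap.toMatrix b b f l k • b l := by
      simpa only [LinearMap.toMatrix_apply] using (b.sum_repr (f (b k))).symm
    calc (dicksonMatrix σ a * B) i k = (σ ^ (i : ℕ)) (f (b k)) :=
          congrFun (dicksonMatrix_mulVec (hσ ▸ pow_orderOf_eq_one σ) a (b k)) i
      _ = _ := by
        simp [hfb, B, mul_apply, Algebra.smul_def, mul_comm, -AlgEquiv.coe_pow]
  have hdet := congrArg det hcomm
  rw [det_mul, det_mul, mul_comm, ← RingHom.mapMatrix_apply, ← RingHom.map_det,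
    LinearMap.det_toMatrix] at hdet
  exact mul_left_cancel₀ hB hdet

end SigmaPolynomial

section Slopes

theorem eq_zero_of_mem_graph_of_fst_eq_zero {R M N : Type*} [Semiring R] [AddCommMonoid M]
    [AddCommMonoid N] [Module R M] [Module R N] {f : M →ₗ[R] N} {v : M × N} (hv : v ∈ f.graph)
    (hv₁ : v.1 = 0) : v = 0 :=
  Prod.ext hv₁ (by rw [hv, hv₁, map_zero, Prod.snd_zero])

variable {K L : Type*} [Field K] [Field L] [Algebra K L]

/-- The affine part of the linear set of `W`: those `m` for which `W` meets the line `y = m x`. -/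
def slopes (W : Submodule K (L × L)) : Set L :=
  {m | W ⊓ (LinearMap.mulLeft K m).graph ≠ ⊥}

theorem mem_slopes {W : Submodule K (L × L)} {m : L} :
    m ∈ slopes W ↔ ∃ v ∈ W, v.1 ≠ 0 ∧ v.2 = m * v.1 := by
  rw [slopes, Set.mem_ofPred_eq, Submodule.ne_bot_iff]
  constructor
  · rintro ⟨v, ⟨hvW, hvm⟩, hv⟩
    exact ⟨v, hvW, mt (eq_zero_of_mem_graph_of_fst_eq_zero hvm) hv, hvm⟩
  · rintro ⟨v, hvW, hv, hvm⟩
    exact ⟨v, ⟨hvW, hvm⟩, fun h => hv (congrArg Prod.fst h)⟩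

theorem mem_slopes_graph {f : L →ₗ[K] L} {m : L} :
    m ∈ slopes f.graph ↔ ∃ x ≠ 0, f x = m * x := by
  rw [mem_slopes]
  constructor
  · rintro ⟨v, hvf, hv, hvm⟩
    exact ⟨v.1, hv, hvf.symm.trans hvm⟩
  · rintro ⟨x, hx, hfx⟩
    exact ⟨(x, f x), rfl, hx, hfx⟩

theorem neg_mem_slopes_graph_iff_det_eq_zero [FiniteDimensional K L] {f : L →ₗ[K] L} {m : L} :
    -m ∈ slopes f.graph ↔ LinearMap.det (f + LinearMap.mulLeft K m) = 0 := by
  rw [LinearMap.det_eq_zero_iff_ker_ne_bot, Submodule.ne_bot_iff, mem_slopes_graph]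
  simp [add_eq_zero_iff_eq_neg, and_comm]

end Slopes

section MinorPolynomial

open Polynomial

/-- The relation of having the same principal minors. -/
def PrincipalMinorsEq {ι R : Type*} [DecidableEq ι] [CommRing R] (A B : Matrix ι ι R) : Prop :=
  ∀ s : Finset ι, (A.submatrix (↑) (↑) : Matrix s s R).det =
    (B.submatrix (↑) (↑) : Matrix s s R).det

namespace PrincipalMinorsEq

variable {ι R : Type*} [DecidableEq ι] [CommRing R] {A B C : Matrix ι ι R}

theorem symm (h : PrincipalMinorsEq A B) : PrincipalMinorsEq B A :=
  fun s => (h s).symm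

theorem trans (hAB : PrincipalMinorsEq A B) (hBC : PrincipalMinorsEq B C) :
    PrincipalMinorsEq A C :=
  fun s => (hAB s).trans (hBC s)

theorem transpose (A : Matrix ι ι R) : PrincipalMinorsEq A Aᵀ :=
  fun _ => (det_transpose _).symm

theorem of_forall_mul_eq [IsDomain R] {d : ι → R} (hd : ∀ i, d i ≠ 0)
    (h : ∀ i j, d i * B i j = A i j * d j) : PrincipalMinorsEq A B := by
  intro s
  have hrows : Matrix.of (fun i j : s => d i * B.submatrix (↑) (↑) i j) =
      Matrix.of fun i j : s => d j * A.submatrix (↑) (↑) i j := by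
    ext i j
    simpa [mul_comm] using h i j
  have hprod : ∏ i : s, d i ≠ 0 := Finset.prod_ne_zero_iff.2 fun i _ => hd i
  refine mul_left_cancel₀ hprod ?_
  rw [← det_mul_row, ← det_mul_column, hrows]

theorem det_submatrix_eq (h : PrincipalMinorsEq A B) {κ : Type*} [Fintype κ] [DecidableEq κ]
    (e : κ ↪ ι) : (A.submatrix e e).det = (B.submatrix e e).det := by
  let e' : κ ≃ (Finset.univ.map e : Finset ι) :=
    (Equiv.ofInjective e e.injective).trans (Equiv.subtypeEquivRight (by simp))
  have hsub (M : Matrix ι ι R) : M.submatrix e e = (M.submatrix (↑) (↑)).submatrix e' e' := rfl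
  rw [hsub, hsub, det_submatrix_equiv_self, det_submatrix_equiv_self, h]

end PrincipalMinorsEq

variable {ι R : Type*} [Fintype ι] [DecidableEq ι] [CommRing R]

theorem det_diagonal_add (d : ι → R) (A : Matrix ι ι R) :
    (diagonal d + A).det =
      ∑ s : Finset ι, (∏ i ∈ sᶜ, d i) * (A.submatrix (↑) (↑) : Matrix s s R).det := by
  rw [add_comm]
  refine (detRowAlternating.map_add_univ A (diagonal d)).trans <|
    Finset.sum_congr rfl fun s _ => ?_
  have hrow : s.piecewise A (diagonal d) = Matrix.of fun i j => s.piecewise (1 : ι → R) d i *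
      Matrix.of (s.piecewise A.row (1 : Matrix ι ι R).row) i j := by
    ext i j
    by_cases hi : i ∈ s
    · simp [Finset.piecewise, hi]
    · simp [Finset.piecewise, hi, diagonal_apply, one_apply]
  have hprod : ∏ i, s.piecewise (1 : ι → R) d i = ∏ i ∈ sᶜ, d i := by
    rw [Finset.prod_piecewise]
    simp [Finset.compl_eq_univ_sdiff]
  calc det (s.piecewise A (diagonal d))
      = (∏ i, s.piecewise (1 : ι → R) d i) *
          det (.of (s.piecewise A.row (1 : Matrix ι ι R).row)) := by rw [hrow, det_mul_column]
    _ = _ := by rw [hprod, det_piecewise_one_eq_submatrix_det]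

variable {n : ℕ}

/-- The polynomial in `m` given by the determinant of `diag(m, m^q, …, m^(q^(n-1))) + A`; its
coefficients are the principal minors of `A`. -/
noncomputable def minorPolynomial (q : ℕ) (A : Matrix (Fin n) (Fin n) R) : R[X] :=
  ∑ s : Finset (Fin n),
    monomial (∑ i ∈ sᶜ, q ^ (i : ℕ)) (A.submatrix (↑) (↑) : Matrix s s R).det

theorem eval_minorPolynomial (q : ℕ) (A : Matrix (Fin n) (Fin n) R) (m : R) :
    (minorPolynomial q A).eval m = (diagonal (fun i : Fin n => m ^ q ^ (i : ℕ)) + A).det := by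
  simp [minorPolynomial, eval_finsetSum, det_diagonal_add, Finset.prod_pow_eq_pow_sum, mul_comm]

theorem coeff_minorPolynomial {q : ℕ} (hq : 2 ≤ q) (A : Matrix (Fin n) (Fin n) R)
    (s : Finset (Fin n)) :
    (minorPolynomial q A).coeff (∑ i ∈ sᶜ, q ^ (i : ℕ)) =
      (A.submatrix (↑) (↑) : Matrix s s R).det := by
  have hinj : ∀ t : Finset (Fin n), ∑ i ∈ tᶜ, q ^ (i : ℕ) = ∑ i ∈ sᶜ, q ^ (i : ℕ) → t = s := by
    intro t ht
    refine compl_injective (Finset.map_injective Fin.valEmbedding (Finset.geomSum_injective hq ?_))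
    simpa using ht
  simp only [minorPolynomial, finsetSum_coeff, coeff_monomial]
  exact (Finset.sum_eq_single s (fun t _ hts => if_neg (hts ∘ hinj t)) (by simp)).trans (if_pos rfl)

theorem natDegree_minorPolynomial_le (q : ℕ) (A : Matrix (Fin n) (Fin n) R) :
    (minorPolynomial q A).natDegree ≤ ∑ i : Fin n, q ^ (i : ℕ) :=
  natDegree_sum_le_of_forall_le _ _ fun _ _ => (natDegree_monomial_le _).trans <|
    Finset.sum_le_sum_of_subset (Finset.subset_univ _)

theorem monic_minorPolynomial {q : ℕ} (hq : 2 ≤ q) (A : Matrix (Fin n) (Fin n) R) :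
    (minorPolynomial q A).Monic :=
  monic_of_natDegree_le_of_coeff_eq_one _ (natDegree_minorPolynomial_le q A) <| by
    simpa using coeff_minorPolynomial hq A ∅

/-- Both `(q-1)`-st powers have degree at most `(q-1)(1 + q + ⋯ + q^(n-1)) < qⁿ`, so they are
determined by their values. -/
theorem minorPolynomial_eq_of_forall_eval_pow_eq {L : Type*} [Field L] [Fintype L] {q : ℕ}
    (hq : 2 ≤ q) (hL : Fintype.card L = q ^ n) {A B : Matrix (Fin n) (Fin n) L}
    (h : ∀ m, (minorPolynomial q A).eval m ^ (q - 1) = (minorPolynomial q B).eval m ^ (q - 1)) :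
    minorPolynomial q A = minorPolynomial q B := by
  have hdeg (A : Matrix (Fin n) (Fin n) L) :
      (minorPolynomial q A ^ (q - 1)).natDegree < Fintype.card L := by
    have hgeom : (q - 1) * ∑ i : Fin n, q ^ (i : ℕ) + 1 = q ^ n := by
      have := geom_sum_mul_add (q - 1) n
      rwa [Nat.sub_add_cancel (by lia), mul_comm, ← Fin.sum_univ_eq_sum_range] at this
    calc (minorPolynomial q A ^ (q - 1)).natDegree
        ≤ (q - 1) * ∑ i : Fin n, q ^ (i : ℕ) :=
          natDegree_pow_le.trans (Nat.mul_le_mul_left _ (natDegree_minorPolynomial_le q A))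
      _ < Fintype.card L := by lia
  have hpow : minorPolynomial q A ^ (q - 1) = minorPolynomial q B ^ (q - 1) :=
    eq_of_natDegree_lt_card_of_eval_eq _ _ (f := id) Function.injective_id
      (fun m => by simpa using h m) (max_lt (hdeg A) (hdeg B))
  have hq0 : q - 1 ≠ 0 := by lia
  exact eq_of_monic_of_associated (monic_minorPolynomial hq A) (monic_minorPolynomial hq B) <|
    associated_of_dvd_dvd ((IsIntegrallyClosed.pow_dvd_pow_iff hq0).1 hpow.dvd)
      ((IsIntegrallyClosed.pow_dvd_pow_iff hq0).1 hpow.symm.dvd)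

end MinorPolynomial

theorem pow_card_sub_one_eq_of_eq_zero_iff {K : Type*} [Field K] [Fintype K] {x y : K}
    (h : x = 0 ↔ y = 0) : x ^ (Fintype.card K - 1) = y ^ (Fintype.card K - 1) := by
  by_cases hx : x = 0
  · rw [hx, h.1 hx]
  · rw [FiniteField.pow_card_sub_one_eq_one x hx, FiniteField.pow_card_sub_one_eq_one y (mt h.2 hx)]

section FiniteFields

variable {K L : Type*} [Field K] [Field L] [Algebra K L] [Fintype K] [Finite L] {n : ℕ} [NeZero n]

local notation "φ" => FiniteField.frobeniusAlgEquivOfAlgebraic K L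

theorem eval_minorPolynomial_dicksonMatrix (hn : finrank K L = n) (a : Fin n → L) (m : L) :
    (minorPolynomial (Fintype.card K) (dicksonMatrix φ a)).eval m =
      algebraMap K L (LinearMap.det (sigmaPolynomial φ a + LinearMap.mulLeft K m)) := by
  have hord : orderOf φ = n := (FiniteField.orderOf_frobeniusAlgEquivOfAlgebraic K L).trans hn
  rw [eval_minorPolynomial, ← sigmaPolynomial_single_zero φ (n := n), ← map_add,
    ← det_dicksonMatrix hord hn, add_comm a, dicksonMatrix_single_zero_add]
  simp [FiniteField.coe_frobeniusAlgEquivOfAlgebraic_iterate]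

theorem principalMinorsEq_dicksonMatrix_of_slopes_eq (hn : finrank K L = n) {a b : Fin n → L}
    (h : slopes (sigmaPolynomial φ a).graph = slopes (sigmaPolynomial φ b).graph) :
    PrincipalMinorsEq (dicksonMatrix φ a) (dicksonMatrix φ b) := by
  intro s
  have := Fintype.ofFinite L
  have hq : 2 ≤ Fintype.card K := Fintype.one_lt_card
  have hpoly : minorPolynomial (Fintype.card K) (dicksonMatrix φ a) =
      minorPolynomial (Fintype.card K) (dicksonMatrix φ b) := by
    refine minorPolynomial_eq_of_forall_eval_pow_eq hq (hn ▸ card_eq_pow_finrank) fun m => ?_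
    have hzero : LinearMap.det (sigmaPolynomial φ a + LinearMap.mulLeft K m) = 0 ↔
        LinearMap.det (sigmaPolynomial φ b + LinearMap.mulLeft K m) = 0 := by
      rw [← neg_mem_slopes_graph_iff_det_eq_zero, h, neg_mem_slopes_graph_iff_det_eq_zero]
    simp only [eval_minorPolynomial_dicksonMatrix hn, ← map_pow (algebraMap K L)]
    rw [pow_card_sub_one_eq_of_eq_zero_iff hzero]
  rw [← coeff_minorPolynomial hq, hpoly, coeff_minorPolynomial hq]

end FiniteFields

section Twist

variable {K L : Type*} [Field K] [Field L] [Algebra K L] {n : ℕ} {σ : L ≃ₐ[K] L}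

variable (σ) in
/-- The coefficients of the `σ`-polynomial `x ↦ l⁻¹ f(l x)`, where `a` are those of `f`. -/
def twist (l : L) (a : Fin n → L) : Fin n → L :=
  fun k => a k * (σ ^ (k : ℕ)) l / l

theorem twist_apply (l : L) (a : Fin n → L) (k : Fin n) :
    twist σ l a k = a k * (σ ^ (k : ℕ)) l / l :=
  rfl

theorem twist_twist (l m : L) (a : Fin n → L) : twist σ l (twist σ m a) = twist σ (l * m) a := by
  ext k
  simp only [twist_apply, map_mul]
  ring

theorem sigmaPolynomial_twist (l : L) (a : Fin n → L) (x : L) :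
    sigmaPolynomial σ (twist σ l a) x = l⁻¹ * sigmaPolynomial σ a (l * x) := by
  simp only [sigmaPolynomial_apply, twist_apply, Finset.mul_sum, map_mul]
  exact Finset.sum_congr rfl fun _ _ => by ring

theorem principalMinorsEq_dicksonMatrix_twist [NeZero n] (hσ : σ ^ n = 1) {l : L} (hl : l ≠ 0)
    (a : Fin n → L) : PrincipalMinorsEq (dicksonMatrix σ a) (dicksonMatrix σ (twist σ l a)) := by
  refine .of_forall_mul_eq (d := fun i => (σ ^ (i : ℕ)) l)
    (fun _ => (map_ne_zero _).2 hl) fun i j => ?_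
  have hj : (σ ^ (i : ℕ)) ((σ ^ ((j - i : Fin n) : ℕ)) l) = (σ ^ (j : ℕ)) l := by
    rw [← AlgEquiv.mul_apply, ← pow_val_add_of_pow_eq_one hσ, add_sub_cancel]
  rw [dicksonMatrix_apply, dicksonMatrix_apply, twist_apply, map_div₀, map_mul, hj,
    mul_div_cancel₀ _ ((map_ne_zero _).2 hl)]

variable (σ) in
/-- The coefficients of the adjoint of a `σ`-polynomial for the trace form. -/
def adjointCoeff [NeZero n] (a : Fin n → L) : Fin n → L :=
  fun k => (σ ^ (k : ℕ)) (a (-k))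

theorem adjointCoeff_apply [NeZero n] (a : Fin n → L) (k : Fin n) :
    adjointCoeff σ a k = (σ ^ (k : ℕ)) (a (-k)) :=
  rfl

theorem pow_val_apply_pow_val_neg_apply [NeZero n] (hσ : σ ^ n = 1) (k : Fin n) (x : L) :
    (σ ^ (k : ℕ)) ((σ ^ ((-k : Fin n) : ℕ)) x) = x := by
  rw [← AlgEquiv.mul_apply, ← pow_val_add_of_pow_eq_one hσ, add_neg_cancel, Fin.val_zero, pow_zero,
    AlgEquiv.one_apply]

theorem adjointCoeff_adjointCoeff [NeZero n] (hσ : σ ^ n = 1) (a : Fin n → L) :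
    adjointCoeff σ (adjointCoeff σ a) = a := by
  ext k
  rw [adjointCoeff_apply, adjointCoeff_apply, pow_val_apply_pow_val_neg_apply hσ, neg_neg]

theorem adjointCoeff_twist [NeZero n] (hσ : σ ^ n = 1) (l : L) (a : Fin n → L) :
    adjointCoeff σ (twist σ l a) = twist σ l⁻¹ (adjointCoeff σ a) := by
  ext k
  rw [adjointCoeff_apply, twist_apply, twist_apply, map_div₀, map_mul,
    pow_val_apply_pow_val_neg_apply hσ, adjointCoeff_apply, map_inv₀,
    div_inv_eq_mul, div_eq_mul_inv]
  ring

theorem dicksonMatrix_adjointCoeff [NeZero n] (hσ : σ ^ n = 1) (a : Fin n → L) :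
    dicksonMatrix σ (adjointCoeff σ a) = (dicksonMatrix σ a)ᵀ := by
  ext i j
  rw [dicksonMatrix_apply, adjointCoeff_apply, transpose_apply, dicksonMatrix_apply, neg_sub,
    ← AlgEquiv.mul_apply, ← pow_val_add_of_pow_eq_one hσ, add_sub_cancel]

theorem trace_algEquiv_mul (τ : L ≃ₐ[K] L) (x y : L) :
    Algebra.trace K L (x * τ y) = Algebra.trace K L (τ.symm x * y) := by
  rw [← Algebra.trace_eq_of_algEquiv τ (τ.symm x * y), map_mul τ, τ.apply_symm_apply]

theorem trace_mul_sigmaPolynomial [NeZero n] (hσ : σ ^ n = 1) (a : Fin n → L) (x y : L) :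
    Algebra.trace K L (x * sigmaPolynomial σ a y) =
      Algebra.trace K L (sigmaPolynomial σ (adjointCoeff σ a) x * y) := by
  simp only [sigmaPolynomial_apply, Finset.mul_sum, Finset.sum_mul, map_sum]
  rw [← Equiv.sum_comp (Equiv.neg (Fin n)) fun k : Fin n =>
    Algebra.trace K L (adjointCoeff σ a k * (σ ^ (k : ℕ)) x * y)]
  refine Finset.sum_congr rfl fun k _ => ?_
  have hsymm (z : L) : (σ ^ (k : ℕ)).symm z = (σ ^ ((-k : Fin n) : ℕ)) z := by
    rw [AlgEquiv.symm_apply_eq, pow_val_apply_pow_val_neg_apply hσ]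
  rw [← mul_assoc, trace_algEquiv_mul, map_mul (AlgEquiv.symm _), hsymm, hsymm, Equiv.neg_apply,
    adjointCoeff_apply, neg_neg, mul_comm ((σ ^ _) x)]

theorem exists_apply_eq_mul_of_prod_eq_one {L : Type} [Field L] [Algebra K L] {σ : L ≃ₐ[K] L}
    (hσ : IsOfFinOrder σ) {z : L} (hz : ∏ i ∈ Finset.range (orderOf σ), (σ ^ i) z = 1) :
    ∃ l ≠ 0, σ l = z * l := by
  let G := Subgroup.zpowers σ
  have : Finite G := hσ.finite_zpowers
  let e : G ≃* (L ≃ₐ[FixedPoints.subfield G L] L) := FixedPoints.toAlgAutMulEquiv G L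
  have hgen : ∀ τ, τ ∈ Subgroup.zpowers (e ⟨σ, Subgroup.mem_zpowers σ⟩) := by
    intro τ
    obtain ⟨⟨_, k, rfl⟩, rfl⟩ := e.surjective τ
    exact ⟨k, by simp only [← map_zpow]; rfl⟩
  have : IsCyclic (L ≃ₐ[FixedPoints.subfield G L] L) := ⟨_, hgen⟩
  have hnorm : Algebra.norm (FixedPoints.subfield G L) z = 1 := by
    apply (algebraMap (FixedPoints.subfield G L) L).injective
    rw [Algebra.norm_eq_prod_automorphisms, map_one, ← hz, Finset.prod_range,
      ← Equiv.prod_comp ((finEquivZPowers hσ).trans e.toEquiv)]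
    rfl
  obtain ⟨y, hy⟩ := groupCohomology.exists_div_of_norm_eq_one hgen hnorm
  have hσy : (y : L) / σ y = z := hy
  refine ⟨(y : L)⁻¹, inv_ne_zero y.ne_zero, ?_⟩
  rw [map_inv₀, ← hσy, div_mul_eq_mul_div, mul_inv_cancel₀ y.ne_zero, one_div]

end Twist

theorem eq_or_eq_of_add_eq_add_of_mul_eq_mul {R : Type*} [CommRing R] [IsDomain R] {x y z w : R}
    (hadd : x + y = z + w) (hmul : x * y = z * w) : x = z ∨ x = w := by
  have : (x - z) * (x - w) = 0 := by linear_combination x * hadd - hmul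
  simpa only [mul_eq_zero, sub_eq_zero] using this

theorem exists_mul_eq_of_binary_forms_eq {L : Type*} [Field L] (σ : L →+* L) {a b c d : L}
    (h₁ : a * σ a = b * σ b) (h₂ : c * σ c = d * σ d) (h₁₂ : a * σ c = b * σ d) :
    ∃ ε, ε * σ ε = 1 ∧ b = a * ε ∧ d = c * ε := by
  have hdiv {x y : L} (hx : x ≠ 0) (h : x * σ x = y * σ y) : y / x * σ (y / x) = 1 := by
    rw [map_div₀, div_mul_div_comm, ← h, div_self (mul_ne_zero hx ((map_ne_zero σ).2 hx))]
  obtain rfl | ha := eq_or_ne a 0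
  · obtain rfl : b = 0 := by simpa using h₁.symm
    obtain rfl | hc := eq_or_ne c 0
    · obtain rfl : d = 0 := by simpa using h₂.symm
      exact ⟨1, by simp⟩
    · exact ⟨d / c, hdiv hc h₂, by simp, (mul_div_cancel₀ d hc).symm⟩
  · refine ⟨b / a, hdiv ha h₁, (mul_div_cancel₀ b ha).symm, σ.injective ?_⟩
    have hc : σ c = b / a * σ d := by
      rw [div_mul_eq_mul_div, eq_div_iff ha, ← h₁₂, mul_comm]
    rw [map_mul, hc]
    linear_combination (-σ d) * hdiv ha h₁

section Quartic

variable {K L : Type*} [Field K] [Field L] [Algebra K L] {σ : L ≃ₐ[K] L} {a b : Fin 4 → L}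

theorem apply_apply_apply_apply_of_pow_four_eq_one (hσ : σ ^ 4 = 1) (x : L) :
    σ (σ (σ (σ x))) = x := by
  simpa using DFunLike.congr_fun hσ x

theorem prod_range_four_pow_apply (x : L) :
    ∏ i ∈ Finset.range 4, (σ ^ i) x = x * σ x * (σ (σ x) * σ (σ (σ x))) := by
  simp [Finset.prod_range_succ, mul_assoc]

theorem dicksonMatrix_fin_four (a : Fin 4 → L) :
    dicksonMatrix σ a =
      !![a 0, a 1, a 2, a 3;
        σ (a 3), σ (a 0), σ (a 1), σ (a 2);
        σ (σ (a 2)), σ (σ (a 3)), σ (σ (a 0)), σ (σ (a 1));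
        σ (σ (σ (a 1))), σ (σ (σ (a 2))), σ (σ (σ (a 3))), σ (σ (σ (a 0)))] := by
  ext i j
  fin_cases i <;> fin_cases j <;> rfl

theorem det_dicksonMatrix_of_coeff_two_eq_zero (ha : a 2 = 0) :
    (dicksonMatrix σ a).det =
      a 0 * σ (a 0) * σ (σ (a 0)) * σ (σ (σ (a 0))) -
      (a 1 * σ (a 3)) * (σ (σ (a 0)) * σ (σ (σ (a 0)))) -
      (σ (a 1) * σ (σ (a 3))) * (a 0 * σ (σ (σ (a 0)))) -
      (σ (σ (a 1)) * σ (σ (σ (a 3)))) * (a 0 * σ (a 0)) -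
      (σ (σ (σ (a 1))) * a 3) * (σ (a 0) * σ (σ (a 0))) +
      (a 1 * σ (a 3)) * (σ (σ (a 1)) * σ (σ (σ (a 3)))) +
      (σ (a 1) * σ (σ (a 3))) * (σ (σ (σ (a 1))) * a 3) -
      ∏ i ∈ Finset.range 4, (σ ^ i) (a 1) - ∏ i ∈ Finset.range 4, (σ ^ i) (a 3) := by
  rw [prod_range_four_pow_apply, prod_range_four_pow_apply, dicksonMatrix_fin_four,
    det_succ_row_zero]
  simp [Fin.sum_univ_four, det_fin_three, Fin.succAbove, ha]
  ring

namespace PrincipalMinorsEq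

variable (h : PrincipalMinorsEq (dicksonMatrix σ a) (dicksonMatrix σ b))

include h

theorem coeff_zero_eq : a 0 = b 0 := by
  have h₀ := h.det_submatrix_eq (⟨![0], by decide⟩ : Fin 1 ↪ Fin 4)
  rwa [det_fin_one, det_fin_one] at h₀

theorem coeff_one_mul_apply_coeff_three_eq : a 1 * σ (a 3) = b 1 * σ (b 3) := by
  have h₀₁ := h.det_submatrix_eq (⟨![0, 1], by decide⟩ : Fin 2 ↪ Fin 4)
  rw [det_fin_two, det_fin_two, dicksonMatrix_fin_four, dicksonMatrix_fin_four] at h₀₁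
  simp only [Function.Embedding.coeFn_mk, submatrix_apply, of_apply, cons_val,
    h.coeff_zero_eq] at h₀₁
  linear_combination -h₀₁

theorem coeff_two_mul_apply_apply_coeff_two_eq : a 2 * σ (σ (a 2)) = b 2 * σ (σ (b 2)) := by
  have h₀₂ := h.det_submatrix_eq (⟨![0, 2], by decide⟩ : Fin 2 ↪ Fin 4)
  rw [det_fin_two, det_fin_two, dicksonMatrix_fin_four, dicksonMatrix_fin_four] at h₀₂
  simp only [Function.Embedding.coeFn_mk, submatrix_apply, of_apply, cons_val,
    h.coeff_zero_eq] at h₀₂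
  linear_combination -h₀₂

theorem cubic_eq :
    a 1 * σ (a 1) * σ (σ (a 2)) + a 2 * σ (a 3) * σ (σ (a 3)) =
      b 1 * σ (b 1) * σ (σ (b 2)) + b 2 * σ (b 3) * σ (σ (b 3)) := by
  have h₀₁₂ := h.det_submatrix_eq (⟨![0, 1, 2], by decide⟩ : Fin 3 ↪ Fin 4)
  have h₀₁ := h.coeff_one_mul_apply_coeff_three_eq
  have h₁₂ := congrArg σ h₀₁
  rw [map_mul, map_mul] at h₁₂
  rw [det_fin_three, det_fin_three, dicksonMatrix_fin_four, dicksonMatrix_fin_four] at h₀₁₂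
  simp only [Function.Embedding.coeFn_mk, submatrix_apply, of_apply, cons_val,
    h.coeff_zero_eq] at h₀₁₂
  linear_combination h₀₁₂ + σ (σ (b 0)) * h₀₁ + b 0 * h₁₂ +
    σ (b 0) * h.coeff_two_mul_apply_apply_coeff_two_eq

theorem cubic_eq_or_eq :
    a 1 * σ (a 1) * σ (σ (a 2)) = b 1 * σ (b 1) * σ (σ (b 2)) ∨
      a 1 * σ (a 1) * σ (σ (a 2)) = b 2 * σ (b 3) * σ (σ (b 3)) := by
  have h₁₃ := h.coeff_one_mul_apply_coeff_three_eq
  have hσ₁₃ := congrArg σ h₁₃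
  rw [map_mul, map_mul] at hσ₁₃
  refine eq_or_eq_of_add_eq_add_of_mul_eq_mul h.cubic_eq ?_
  calc a 1 * σ (a 1) * σ (σ (a 2)) * (a 2 * σ (a 3) * σ (σ (a 3)))
      = a 1 * σ (a 3) * (σ (a 1) * σ (σ (a 3))) * (a 2 * σ (σ (a 2))) := by ring
    _ = b 1 * σ (b 1) * σ (σ (b 2)) * (b 2 * σ (b 3) * σ (σ (b 3))) := by
      rw [h₁₃, hσ₁₃, h.coeff_two_mul_apply_apply_coeff_two_eq]
      ring

theorem coeff_two_eq_zero_iff : a 2 = 0 ↔ b 2 = 0 := by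
  simpa using congrArg (· = 0) h.coeff_two_mul_apply_apply_coeff_two_eq

theorem quartic_eq (hσ : σ ^ 4 = 1) (ha : a 2 = 0) :
    (∏ i ∈ Finset.range 4, (σ ^ i) (a 1)) + ∏ i ∈ Finset.range 4, (σ ^ i) (a 3) =
      (∏ i ∈ Finset.range 4, (σ ^ i) (b 1)) + ∏ i ∈ Finset.range 4, (σ ^ i) (b 3) := by
  have hb := h.coeff_two_eq_zero_iff.1 ha
  have h₀ := h.coeff_one_mul_apply_coeff_three_eq
  have h₁ := congrArg σ h₀
  have h₂ := congrArg σ h₁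
  have h₃ := congrArg σ h₂
  simp only [map_mul, apply_apply_apply_apply_of_pow_four_eq_one hσ] at h₁ h₂ h₃
  have hdet := h.det_submatrix_eq (.refl _)
  simp only [Function.Embedding.coe_refl, submatrix_id_id,
    det_dicksonMatrix_of_coeff_two_eq_zero ha, det_dicksonMatrix_of_coeff_two_eq_zero hb] at hdet
  rw [h.coeff_zero_eq, h₀, h₁, h₂, h₃] at hdet
  linear_combination -hdet

theorem prod_coeff_one_eq_or_eq (hσ : σ ^ 4 = 1) (ha : a 2 = 0) :
    ∏ i ∈ Finset.range 4, (σ ^ i) (a 1) = ∏ i ∈ Finset.range 4, (σ ^ i) (b 1) ∨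
      ∏ i ∈ Finset.range 4, (σ ^ i) (a 1) = ∏ i ∈ Finset.range 4, (σ ^ i) (σ (b 3)) := by
  have hshift (x : L) :
      ∏ i ∈ Finset.range 4, (σ ^ i) (σ x) = ∏ i ∈ Finset.range 4, (σ ^ i) x := by
    simp only [prod_range_four_pow_apply, apply_apply_apply_apply_of_pow_four_eq_one hσ]
    ring
  rw [hshift]
  refine eq_or_eq_of_add_eq_add_of_mul_eq_mul (h.quartic_eq hσ ha) ?_
  rw [← hshift (a 3), ← hshift (b 3), ← Finset.prod_mul_distrib, ← Finset.prod_mul_distrib]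
  simp only [← map_mul, h.coeff_one_mul_apply_coeff_three_eq]

end PrincipalMinorsEq

theorem eq_twist_fin_four {l : L} (hl : l ≠ 0) (h₀ : b 0 = a 0) (h₁ : b 1 * l = a 1 * σ l)
    (h₂ : b 2 * l = a 2 * σ (σ l)) (h₃ : b 3 * l = a 3 * σ (σ (σ l))) : b = twist σ l a := by
  refine funext fun k => (eq_div_iff hl).2 ?_
  fin_cases k
  · exact congrArg (· * l) h₀
  · exact h₁
  · exact h₂
  · exact h₃

end Quartic

section Classification

variable {K : Type*} {L : Type} [Field K] [Field L] [Algebra K L] {σ : L ≃ₐ[K] L} {a b : Fin 4 → L}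

theorem exists_eq_twist_of_coeff_two_eq (hσ : orderOf σ = 4)
    (h : PrincipalMinorsEq (dicksonMatrix σ a) (dicksonMatrix σ b)) (h₂ : a 2 = b 2)
    (ha : a 2 ≠ 0) (hcubic : a 1 * σ (a 1) * σ (σ (a 2)) = b 1 * σ (b 1) * σ (σ (b 2))) :
    ∃ l ≠ 0, b = twist σ l a := by
  have h₁₁ : a 1 * σ (a 1) = b 1 * σ (b 1) :=
    mul_right_cancel₀ (b := σ (σ (a 2))) (by simpa using ha) (by rwa [← h₂] at hcubic)
  have h₃₃ : a 3 * σ (a 3) = b 3 * σ (b 3) := by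
    have := h.cubic_eq
    rw [hcubic, add_right_inj, h₂, mul_assoc, mul_assoc, ← map_mul, ← map_mul] at this
    exact σ.injective (mul_left_cancel₀ (h₂ ▸ ha) this)
  obtain ⟨ε, hε, h₁, h₃⟩ := exists_mul_eq_of_binary_forms_eq (σ : L →+* L) h₁₁ h₃₃
    h.coeff_one_mul_apply_coeff_three_eq
  replace hε : ε * σ ε = 1 := hε
  obtain ⟨l, hl, hσl⟩ : ∃ l ≠ 0, σ l = ε * l := by
    refine exists_apply_eq_mul_of_prod_eq_one (orderOf_pos_iff.1 (hσ ▸ four_pos)) ?_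
    have hε' := congrArg σ (congrArg σ hε)
    simp only [map_mul, map_one] at hε'
    rw [hσ, prod_range_four_pow_apply, hε, one_mul, hε']
  have hσσl : σ (σ l) = l := by
    rw [hσl, map_mul, hσl, ← mul_assoc, mul_comm (σ ε), hε, one_mul]
  refine ⟨l, hl, eq_twist_fin_four hl h.coeff_zero_eq.symm ?_ ?_ ?_⟩
  · rw [h₁, hσl, mul_assoc]
  · rw [hσσl, h₂]
  · rw [hσσl, h₃, hσl, mul_assoc]

theorem exists_eq_twist_of_coeff_two_ne_zero (hσ : orderOf σ = 4)
    (h : PrincipalMinorsEq (dicksonMatrix σ a) (dicksonMatrix σ b)) (ha : a 2 ≠ 0)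
    (hcubic : a 1 * σ (a 1) * σ (σ (a 2)) = b 1 * σ (b 1) * σ (σ (b 2))) :
    ∃ l ≠ 0, b = twist σ l a := by
  have hσ4 : σ ^ 4 = 1 := hσ ▸ pow_orderOf_eq_one σ
  have hσ2 : orderOf (σ ^ 2) = 2 := by
    rw [orderOf_pow_of_dvd two_ne_zero (by simp [hσ]), hσ]
  obtain ⟨l, hl, hσl⟩ : ∃ l ≠ 0, (σ ^ 2) l = b 2 / a 2 * l := by
    refine exists_apply_eq_mul_of_prod_eq_one (orderOf_pos_iff.1 (by simp [hσ2])) ?_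
    have hne : a 2 * σ (σ (a 2)) ≠ 0 := by simpa using ha
    rw [hσ2]
    simp [Finset.prod_range_succ, pow_two, ← h.coeff_two_mul_apply_apply_coeff_two_eq, div_self hne]
  have hσσl : σ (σ l) = b 2 / a 2 * l := hσl
  have htwist₁ : twist σ l a 1 = a 1 * σ l / l := rfl
  have htwist₂ : twist σ l a 2 = a 2 * σ (σ l) / l := rfl
  have htwist₂_eq : twist σ l a 2 = b 2 := by
    rw [htwist₂, hσσl, ← mul_assoc, mul_div_cancel₀ _ ha, mul_div_cancel_right₀ _ hl]
  have htwist_cubic : twist σ l a 1 * σ (twist σ l a 1) * σ (σ (twist σ l a 2)) =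
      b 1 * σ (b 1) * σ (σ (b 2)) := by
    have hσl₀ : σ l ≠ 0 := (map_ne_zero σ).2 hl
    have hσσl₀ : σ (σ l) ≠ 0 := (map_ne_zero σ).2 hσl₀
    rw [htwist₁, htwist₂, ← hcubic]
    simp only [map_div₀, map_mul, apply_apply_apply_apply_of_pow_four_eq_one hσ4]
    field_simp
  obtain ⟨m, hm, hbm⟩ := exists_eq_twist_of_coeff_two_eq hσ
    ((principalMinorsEq_dicksonMatrix_twist hσ4 hl a).symm.trans h) htwist₂_eq
    (htwist₂_eq ▸ mt h.coeff_two_eq_zero_iff.2 ha) htwist_cubic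
  exact ⟨m * l, mul_ne_zero hm hl, by rw [hbm, twist_twist]⟩

theorem exists_eq_twist_of_coeff_two_eq_zero (hσ : orderOf σ = 4)
    (h : PrincipalMinorsEq (dicksonMatrix σ a) (dicksonMatrix σ b)) (ha₂ : a 2 = 0) (ha₁ : a 1 ≠ 0)
    (hprod : ∏ i ∈ Finset.range 4, (σ ^ i) (a 1) = ∏ i ∈ Finset.range 4, (σ ^ i) (b 1)) :
    ∃ l ≠ 0, b = twist σ l a := by
  have hprod_ne : ∏ i ∈ Finset.range 4, (σ ^ i) (a 1) ≠ 0 :=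
    Finset.prod_ne_zero_iff.2 fun _ _ => (map_ne_zero _).2 ha₁
  obtain ⟨l, hl, hσl⟩ : ∃ l ≠ 0, σ l = b 1 / a 1 * l := by
    refine exists_apply_eq_mul_of_prod_eq_one (orderOf_pos_iff.1 (by simp [hσ])) ?_
    simp only [hσ, map_div₀, Finset.prod_div_distrib, ← hprod, div_self hprod_ne]
  have h₁ : b 1 * l = a 1 * σ l := by rw [hσl, ← mul_assoc, mul_div_cancel₀ _ ha₁]
  have h₃ : b 3 * l = a 3 * σ (σ (σ l)) := by
    apply σ.injective
    rw [map_mul, map_mul, apply_apply_apply_apply_of_pow_four_eq_one (hσ ▸ pow_orderOf_eq_one σ)]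
    refine mul_left_cancel₀ ha₁ ?_
    rw [mul_left_comm, ← h₁, ← mul_assoc _ (σ _), h.coeff_one_mul_apply_coeff_three_eq]
    ring
  refine ⟨l, hl, eq_twist_fin_four hl h.coeff_zero_eq.symm h₁ ?_ h₃⟩
  rw [ha₂, h.coeff_two_eq_zero_iff.1 ha₂, zero_mul, zero_mul]

/-- The minors also agree with those of the adjoint of `b`, so it does not matter in which order the
two summands of `cubic_eq` or of `quartic_eq` are matched. -/
theorem exists_eq_twist_or_adjointCoeff_eq_twist_of_ne_zero (hσ : orderOf σ = 4)
    (h : PrincipalMinorsEq (dicksonMatrix σ a) (dicksonMatrix σ b)) (ha : a 1 ≠ 0 ∨ a 2 ≠ 0) :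
    (∃ l ≠ 0, b = twist σ l a) ∨ ∃ l ≠ 0, adjointCoeff σ b = twist σ l a := by
  have hσ4 : σ ^ 4 = 1 := hσ ▸ pow_orderOf_eq_one σ
  have hadj : PrincipalMinorsEq (dicksonMatrix σ a) (dicksonMatrix σ (adjointCoeff σ b)) := by
    rw [dicksonMatrix_adjointCoeff hσ4]
    exact h.trans (.transpose _)
  by_cases ha₂ : a 2 = 0
  · have ha₁ := ha.resolve_right (not_not.2 ha₂)
    exact (h.prod_coeff_one_eq_or_eq hσ4 ha₂).imp
      (exists_eq_twist_of_coeff_two_eq_zero hσ h ha₂ ha₁)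
      (exists_eq_twist_of_coeff_two_eq_zero hσ hadj ha₂ ha₁)
  · refine h.cubic_eq_or_eq.imp (exists_eq_twist_of_coeff_two_ne_zero hσ h ha₂)
      fun hcubic => exists_eq_twist_of_coeff_two_ne_zero hσ hadj ha₂ ?_
    have hadj₁ : adjointCoeff σ b 1 = σ (b 3) := rfl
    have hadj₂ : adjointCoeff σ b 2 = σ (σ (b 2)) := rfl
    rw [hcubic, hadj₁, hadj₂, apply_apply_apply_apply_of_pow_four_eq_one hσ4]
    ring

theorem exists_eq_twist_or_eq_twist_adjointCoeff (hσ : orderOf σ = 4)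
    (h : PrincipalMinorsEq (dicksonMatrix σ a) (dicksonMatrix σ b)) :
    (∃ l ≠ 0, b = twist σ l a) ∨ ∃ l ≠ 0, b = twist σ l (adjointCoeff σ a) := by
  have hσ4 : σ ^ 4 = 1 := hσ ▸ pow_orderOf_eq_one σ
  have hswap {l : L} {c : Fin 4 → L} (hc : adjointCoeff σ b = twist σ l c) :
      b = twist σ l⁻¹ (adjointCoeff σ c) := by
    rw [← adjointCoeff_twist hσ4, ← hc, adjointCoeff_adjointCoeff hσ4]
  by_cases ha : a 1 ≠ 0 ∨ a 2 ≠ 0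
  · exact (exists_eq_twist_or_adjointCoeff_eq_twist_of_ne_zero hσ h ha).imp_right
      fun ⟨l, hl, hb⟩ => ⟨l⁻¹, inv_ne_zero hl, hswap hb⟩
  obtain ⟨ha₁, ha₂⟩ : a 1 = 0 ∧ a 2 = 0 := by simpa only [not_or, not_not] using ha
  by_cases ha₃ : a 3 = 0
  · have hb₁₃ := h.coeff_one_mul_apply_coeff_three_eq
    have hprod := h.quartic_eq hσ4 ha₂
    simp only [prod_range_four_pow_apply, ha₁, ha₃, map_zero, mul_zero] at hb₁₃ hprod
    obtain ⟨hb₁, hb₃⟩ : b 1 = 0 ∧ b 3 = 0 := by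
      obtain hb | hb := mul_eq_zero.1 hb₁₃.symm
      · exact ⟨hb, by simpa [hb] using hprod.symm⟩
      · rw [map_eq_zero] at hb
        exact ⟨by simpa [hb] using hprod.symm, hb⟩
    refine .inl ⟨1, one_ne_zero, eq_twist_fin_four one_ne_zero h.coeff_zero_eq.symm ?_ ?_ ?_⟩
    · rw [hb₁, ha₁, zero_mul, zero_mul]
    · rw [h.coeff_two_eq_zero_iff.1 ha₂, ha₂, zero_mul, zero_mul]
    · rw [hb₃, ha₃, zero_mul, zero_mul]
  · have hadj : PrincipalMinorsEq (dicksonMatrix σ (adjointCoeff σ a))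
        (dicksonMatrix σ (adjointCoeff σ b)) := by
      rw [dicksonMatrix_adjointCoeff hσ4, dicksonMatrix_adjointCoeff hσ4]
      exact ((PrincipalMinorsEq.transpose _).symm.trans h).trans (.transpose _)
    have hadj₁ : adjointCoeff σ a 1 ≠ 0 := (map_ne_zero σ).2 ha₃
    obtain ⟨l, hl, hb⟩ | ⟨l, hl, hb⟩ :=
      exists_eq_twist_or_adjointCoeff_eq_twist_of_ne_zero hσ hadj (.inl hadj₁)
    · exact .inl ⟨l⁻¹, inv_ne_zero hl, by rw [hswap hb, adjointCoeff_adjointCoeff hσ4]⟩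
    · exact .inr ⟨l, hl, by rw [← hb, adjointCoeff_adjointCoeff hσ4]⟩

end Classification

section Weight

variable {K L : Type*} [Field K] [Field L] [Algebra K L]

/-- The weight in the linear set of `W` of the point of slope `m`. -/
noncomputable def weight (W : Submodule K (L × L)) (m : L) : ℕ :=
  finrank K (W ⊓ (LinearMap.mulLeft K m).graph : Submodule K (L × L))

theorem weight_pos_iff [FiniteDimensional K L] {W : Submodule K (L × L)} {m : L} :
    0 < weight W m ↔ m ∈ slopes W := by
  rw [weight, Nat.pos_iff_ne_zero, Ne, Submodule.finrank_eq_zero]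
  rfl

theorem weight_graph (f : L →ₗ[K] L) (m : L) :
    weight f.graph m = finrank K (LinearMap.ker (f - LinearMap.mulLeft K m)) := by
  have hinj : Function.Injective (LinearMap.prod .id f) := fun x y hxy => congrArg Prod.fst hxy
  have hmap : f.graph ⊓ (LinearMap.mulLeft K m).graph =
      (LinearMap.ker (f - LinearMap.mulLeft K m)).map (LinearMap.prod .id f) := by
    ext ⟨x, y⟩
    simp only [Submodule.mem_inf, LinearMap.mem_graph_iff, LinearMap.mulLeft_apply,
      Submodule.mem_map, LinearMap.mem_ker, LinearMap.sub_apply, sub_eq_zero]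
    constructor
    · rintro ⟨rfl, hx⟩
      exact ⟨x, hx, rfl⟩
    · rintro ⟨z, hz, h⟩
      obtain ⟨rfl, rfl⟩ := Prod.ext_iff.1 h
      exact ⟨rfl, hz⟩
  rw [weight, hmap, (Submodule.equivMapOfInjective _ hinj _).finrank_eq]

theorem disjoint_graph_mulLeft {m n : L} (hmn : m ≠ n) :
    Disjoint (LinearMap.mulLeft K m).graph (LinearMap.mulLeft K n).graph := by
  rw [Submodule.disjoint_def]
  rintro ⟨x, _⟩ (rfl : _ = m * x) (hx : m * x = n * x)
  obtain rfl : x = 0 := by_contra fun h => hmn (mul_right_cancel₀ h hx)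
  simp

theorem weight_add_weight_le [FiniteDimensional K L] (W : Submodule K (L × L)) {m n : L}
    (hmn : m ≠ n) : weight W m + weight W n ≤ finrank K W := by
  have hinf := (disjoint_graph_mulLeft (K := K) hmn).mono (inf_le_right (a := W))
    (inf_le_right (a := W))
  rw [weight, weight, ← Submodule.finrank_sup_add_finrank_inf_eq, hinf.eq_bot, finrank_bot,
    add_zero]
  exact Submodule.finrank_mono (sup_le inf_le_left inf_le_left)

theorem card_add_card_slopes [Finite L] {W : Submodule K (L × L)}
    (hW : ∀ v ∈ W, v.1 = 0 → v = 0) {S : Finset L} (hS : (S : Set L) = slopes W) :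
    Nat.card W + S.card = 1 + ∑ m ∈ S, Nat.card K ^ weight W m := by
  classical
  have := Fintype.ofFinite L
  let A : Finset (L × L) := {v | v ∈ W ∧ v ≠ 0}
  have hA : Nat.card W = A.card + 1 := by
    rw [Nat.card_eq_fintype_card, Fintype.card_subtype,
      ← Finset.card_erase_add_one (a := (0 : L × L)) (by simp)]
    congr 2
    ext v
    simp [A, and_comm]
  have hfiber (m : L) : Nat.card K ^ weight W m = {v ∈ A | v.2 / v.1 = m}.card + 1 := by
    rw [weight, ← natCard_eq_pow_finrank, Nat.card_eq_fintype_card, Fintype.card_subtype,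
      ← Finset.card_erase_add_one (a := (0 : L × L)) (by simp)]
    congr 2
    ext v
    by_cases hv₁ : v.1 = 0
    · have hv₀ : v ∈ W → v = 0 := fun hv => hW v hv hv₁
      simp only [A, Finset.mem_erase, Finset.mem_filter, Submodule.mem_inf]
      tauto
    · simp [A, div_eq_iff hv₁, and_assoc, and_left_comm]
  have hmem : ∀ v ∈ A, v.2 / v.1 ∈ S := by
    intro v hv
    obtain ⟨hvW, hv₀⟩ := (Finset.mem_filter.1 hv).2
    rw [← Finset.mem_coe, hS, mem_slopes]
    have hv₁ : v.1 ≠ 0 := mt (hW v hvW) hv₀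
    exact ⟨v, hvW, hv₁, (div_mul_cancel₀ _ hv₁).symm⟩
  rw [hA, Finset.card_eq_sum_card_fiberwise hmem, Finset.sum_congr rfl fun m _ => hfiber m,
    Finset.sum_add_distrib, Finset.sum_const, smul_eq_mul, mul_one]
  ring

theorem card_slopes_mul_card_le [Finite L] {W : Submodule K (L × L)}
    (hW : ∀ v ∈ W, v.1 = 0 → v = 0) {S : Finset L} (hS : (S : Set L) = slopes W) :
    S.card * Nat.card K + 1 ≤ Nat.card W + S.card := by
  have : Finite K := .of_injective _ (algebraMap K L).injective
  rw [card_add_card_slopes hW hS, add_comm, ← smul_eq_mul]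
  gcongr
  refine Finset.card_nsmul_le_sum _ _ _ fun m hm => Nat.le_self_pow ?_ _
  rw [← Finset.mem_coe, hS, ← weight_pos_iff] at hm
  exact hm.ne'

end Weight

theorem det_submatrix_succAbove_eq_zero {R : Type*} [CommRing R] [IsDomain R] {n : ℕ}
    {M : Matrix (Fin (n + 1)) (Fin (n + 1)) R} {v : Fin (n + 1) → R} {j : Fin (n + 1)} (hv : v ≠ 0)
    (hvj : v j = 0) (hMv : M *ᵥ v = 0) (r : Fin n → Fin (n + 1)) :
    (M.submatrix r j.succAbove).det = 0 := by
  refine exists_mulVec_eq_zero_iff.1 ⟨v ∘ j.succAbove, fun h => hv ?_, funext fun i => ?_⟩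
  · ext k
    obtain rfl | ⟨k, rfl⟩ := j.eq_self_or_eq_succAbove k
    exacts [hvj, congrFun h k]
  · refine Eq.trans ?_ (congrFun hMv (r i))
    simp only [mulVec, dotProduct, Fin.sum_univ_succAbove _ j, hvj, mul_zero, zero_add,
      submatrix_apply, Function.comp_apply]

open Polynomial in
theorem card_le_of_det_eq_zero {R : Type*} [CommRing R] [IsDomain R] {n : ℕ} (hn : n ≠ 0)
    {a b c d e f g h i : R} (hi : i ≠ 0) {T : Finset R}
    (hT : ∀ m ∈ T, !![a - m, b, c; d, e - m ^ n, f; g, h, i].det = 0) : T.card ≤ n + 1 := by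
  let P : R[X] := C (!![a, b, c; d, e, f; g, h, i].det) + C (f * h - e * i) * X +
    C (c * g - a * i) * X ^ n + C i * X ^ (n + 1)
  have hdeg : P.natDegree ≤ n + 1 := by
    simp only [P]
    compute_degree!
  have hP : P ≠ 0 := fun hP => hi <| by
    simpa [P, coeff_X, coeff_C, coeff_C_mul, coeff_X_pow, hn, -map_sub, -map_mul] using
      congrArg (coeff · (n + 1)) hP
  refine (card_le_degree_of_subset_roots fun m hm => (mem_roots hP).2 ?_).trans hdeg
  rw [IsRoot.def, ← hT m hm]
  simp only [P, det_fin_three, of_apply, cons_val, eval_add, eval_mul, eval_pow, eval_C, eval_X]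
  ring

theorem finrank_graph {R M N : Type*} [Ring R] [AddCommGroup M] [AddCommGroup N]
    [Module R M] [Module R N] (f : M →ₗ[R] N) : finrank R f.graph = finrank R M := by
  rw [f.graph_eq_range_prod]
  exact LinearMap.finrank_range_of_inj fun x y hxy => congrArg Prod.fst hxy

/-- Either one weight is `3` and the others are at most `1`, or all weights are at most `2` and at
most `q + 1` of them equal `2`. -/
theorem sum_pow_add_le {ι : Type*} {S : Finset ι} {w : ι → ℕ} {q : ℕ} (hq : 0 < q)
    (hw : ∀ m ∈ S, w m ≤ 3) (hadd : ∀ m ∈ S, ∀ k ∈ S, m ≠ k → w m + w k ≤ 4)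
    (hheavy : {m ∈ S | 2 ≤ w m}.card ≤ q + 1) :
    ∑ m ∈ S, q ^ w m + q ≤ S.card * q + q ^ 3 := by
  classical
  have hlight {m : ι} (hm : w m ≤ 1) : q ^ w m ≤ q :=
    (Nat.pow_le_pow_right hq hm).trans_eq (pow_one q)
  by_cases h3 : ∃ m ∈ S, w m = 3
  · obtain ⟨m, hm, hm3⟩ := h3
    have hrest : ∑ k ∈ S.erase m, q ^ w k ≤ (S.erase m).card * q := by
      refine Finset.sum_le_card_nsmul _ _ _ fun k hk => hlight ?_
      have := hadd m hm k (Finset.mem_of_mem_erase hk) (Finset.ne_of_mem_erase hk).symm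
      omega
    rw [← Finset.add_sum_erase S _ hm, ← Finset.card_erase_add_one hm, hm3]
    linarith
  · have hbound : ∀ m ∈ S, q ^ w m ≤ q + if 2 ≤ w m then q ^ 2 - q else 0 := by
      intro m hm
      split_ifs with h
      · have : w m = 2 := by grind
        rw [this]
        omega
      · exact hlight (by omega)
    have hsum := Finset.sum_le_sum hbound
    rw [Finset.sum_add_distrib, ← Finset.sum_filter, Finset.sum_const, Finset.sum_const,
      smul_eq_mul, smul_eq_mul] at hsum
    have hmul := Nat.mul_le_mul_right (q ^ 2 - q) hheavy
    have hcube : (q + 1) * (q ^ 2 - q) + q = q ^ 3 := by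
      zify [Nat.le_self_pow two_ne_zero q]
      ring
    omega

section FiniteFields

variable {K L : Type*} [Field K] [Fintype K] [Field L] [Finite L] [Algebra K L]

local notation "φ" => FiniteField.frobeniusAlgEquivOfAlgebraic K L

theorem mem_range_algebraMap_of_frobenius_eq_self {z : L} (hz : φ z = z) :
    z ∈ Set.range (algebraMap K L) := by
  refine (IsGalois.mem_range_algebraMap_iff_fixed z).2 fun g => ?_
  obtain ⟨i, rfl⟩ := (FiniteField.bijective_frobeniusAlgEquivOfAlgebraic_pow K L).2 g
  simp only [AlgEquiv.coe_pow]
  exact Function.iterate_fixed hz i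

variable {n : ℕ}

theorem linearIndependent_pair_frobenius_pow (hn : finrank K L = n) {x y : L}
    (hxy : LinearIndependent K ![x, y]) :
    LinearIndependent L ![fun i : Fin n => (φ ^ (i : ℕ)) x, fun i : Fin n => (φ ^ (i : ℕ)) y] := by
  have hn' : 2 ≤ n := by simpa [hn] using hxy.fintype_card_le_finrank
  have hx : x ≠ 0 := hxy.ne_zero 0
  refine (LinearIndependent.pair_iff' fun h => hx (congrFun h ⟨0, by omega⟩)).2 fun c hc => ?_
  have hc₀ : c * x = y := congrFun hc ⟨0, by omega⟩
  have hc₁ : c * φ x = φ y := congrFun hc ⟨1, hn'⟩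
  rw [← hc₀, map_mul] at hc₁
  obtain ⟨k, rfl⟩ := mem_range_algebraMap_of_frobenius_eq_self
    (mul_right_cancel₀ ((map_ne_zero φ).2 hx) hc₁).symm
  exact (LinearIndependent.pair_iff' hx).1 hxy k ((Algebra.smul_def k x).trans hc₀)

theorem exists_dicksonMatrix_mulVec_eq_zero [NeZero n] (hn : finrank K L = n) {a : Fin n → L}
    (ha : 2 ≤ finrank K (LinearMap.ker (sigmaPolynomial φ a))) (j : Fin n) :
    ∃ v ≠ 0, v j = 0 ∧ dicksonMatrix φ a *ᵥ v = 0 := by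
  have hφ : φ ^ n = 1 := by
    rw [← hn, ← FiniteField.orderOf_frobeniusAlgEquivOfAlgebraic K L, pow_orderOf_eq_one]
  have hker (x : LinearMap.ker (sigmaPolynomial φ a)) :
      (dicksonMatrix φ a *ᵥ fun i => (φ ^ (i : ℕ)) x) = 0 := by
    rw [dicksonMatrix_mulVec hφ, LinearMap.mem_ker.1 x.2]
    exact funext fun i => map_zero (φ ^ (i : ℕ))
  obtain ⟨x, hx⟩ : ∃ x : LinearMap.ker (sigmaPolynomial φ a), x ≠ 0 :=
    (finrank_pos_iff_exists_ne_zero (R := K)).1 (by omega)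
  obtain ⟨y, hxy⟩ := exists_linearIndependent_pair_of_one_lt_finrank (R := K) ha hx
  have hindep := linearIndependent_pair_frobenius_pow hn (x := (x : L)) (y := y) <|
    LinearIndependent.pair_iff.2 fun s t hst => LinearIndependent.pair_iff.1 hxy s t <|
      Subtype.ext hst
  have hφx : (φ ^ (j : ℕ)) (x : L) ≠ 0 :=
    (map_ne_zero _).2 fun h => hx (Subtype.ext h)
  refine ⟨(φ ^ (j : ℕ)) (y : L) • (fun i : Fin n => (φ ^ (i : ℕ)) (x : L)) +
    (-(φ ^ (j : ℕ)) (x : L)) • fun i : Fin n => (φ ^ (i : ℕ)) (y : L), fun hv => ?_, ?_, ?_⟩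
  · exact neg_ne_zero.2 hφx (LinearIndependent.pair_iff.1 hindep _ _ hv).2
  · simp only [Pi.add_apply, Pi.smul_apply, smul_eq_mul]
    ring
  · rw [mulVec_add, mulVec_smul, mulVec_smul, hker, hker, smul_zero, smul_zero, add_zero]

theorem det_eq_zero_of_two_le_weight (hn : finrank K L = 4) {a : Fin 4 → L} {m : L}
    (hm : 2 ≤ weight (sigmaPolynomial φ a).graph m) (r : Fin 3 → Fin 4) (j : Fin 4) :
    ((dicksonMatrix φ (Pi.single 0 (-m) + a)).submatrix r j.succAbove).det = 0 := by
  have hker : sigmaPolynomial φ (Pi.single 0 (-m) + a) =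
      sigmaPolynomial φ a - LinearMap.mulLeft K m := by
    ext x
    simp only [map_add, sigmaPolynomial_single_zero, LinearMap.add_apply, LinearMap.sub_apply,
      LinearMap.mulLeft_apply, neg_mul, neg_add_eq_sub]
  rw [weight_graph, ← hker] at hm
  obtain ⟨v, hv, hvj, hMv⟩ := exists_dicksonMatrix_mulVec_eq_zero hn hm j
  exact det_submatrix_succAbove_eq_zero hv hvj hMv r

/-- A suitable `3 × 3` minor of the Dickson matrix of `f - m` has degree `q + 1` in `m`. -/
theorem card_le_of_two_le_weight (hn : finrank K L = 4) {a : Fin 4 → L} (ha : a 1 ≠ 0 ∨ a 3 ≠ 0)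
    {T : Finset L} (hT : ∀ m ∈ T, 2 ≤ weight (sigmaPolynomial φ a).graph m) :
    T.card ≤ Fintype.card K + 1 := by
  obtain ha₁ | ha₃ := ha
  · have hdet : ∀ m ∈ T, !![a 0 - m, a 1, a 3; φ (a 3), φ (a 0) - φ m, φ (a 2);
        φ (φ (a 2)), φ (φ (a 3)), φ (φ (a 1))].det = 0 := by
      intro m hm
      rw [← det_eq_zero_of_two_le_weight hn (hT m hm) ![0, 1, 2] 2, dicksonMatrix_fin_four]
      congr 1
      ext i j
      fin_cases i <;> fin_cases j <;> simp [Fin.succAbove, neg_add_eq_sub,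
        -FiniteField.frobeniusAlgEquivOfAlgebraic_apply]
    exact card_le_of_det_eq_zero Fintype.card_ne_zero (by simpa using ha₁) hdet
  · have hdet : ∀ m ∈ T, !![a 0 - m, a 1, a 2; φ (a 3), φ (a 0) - φ m, φ (a 1);
        φ (φ (φ (a 1))), φ (φ (φ (a 2))), φ (φ (φ (a 3)))].det = 0 := by
      intro m hm
      rw [← det_eq_zero_of_two_le_weight hn (hT m hm) ![0, 1, 3] 3, dicksonMatrix_fin_four]
      congr 1
      ext i j
      fin_cases i <;> fin_cases j <;> simp [Fin.succAbove, neg_add_eq_sub,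
        -FiniteField.frobeniusAlgEquivOfAlgebraic_apply]
    exact card_le_of_det_eq_zero Fintype.card_ne_zero (by simpa using ha₃) hdet

theorem weight_graph_le_three (hn : finrank K L = 4) {a : Fin 4 → L} (ha : a 1 ≠ 0 ∨ a 3 ≠ 0)
    (m : L) : weight (sigmaPolynomial φ a).graph m ≤ 3 := by
  by_contra! h
  rw [weight_graph] at h
  have htop : LinearMap.ker (sigmaPolynomial φ a - LinearMap.mulLeft K m) = ⊤ :=
    Submodule.eq_top_of_finrank_eq ((Submodule.finrank_le _).antisymm (hn.le.trans h))
  rw [LinearMap.ker_eq_top, sub_eq_zero, ← sigmaPolynomial_single_zero (n := 4) φ] at htop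
  have := sigmaPolynomial_injective
    ((FiniteField.orderOf_frobeniusAlgEquivOfAlgebraic K L).trans hn) htop
  simp [this] at ha

theorem le_card_slopes_mul_card (hn : finrank K L = 4) {a : Fin 4 → L}
    (ha : a 1 ≠ 0 ∨ a 3 ≠ 0) {S : Finset L}
    (hS : (S : Set L) = slopes (sigmaPolynomial φ a).graph) :
    Nat.card K ^ 4 + S.card + Nat.card K ≤ 1 + S.card * Nat.card K + Nat.card K ^ 3 := by
  have hrank : finrank K (sigmaPolynomial φ a).graph = 4 := by rw [finrank_graph, hn]
  have hcard := card_add_card_slopes (fun v => eq_zero_of_mem_graph_of_fst_eq_zero) hS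
  have hheavy : {m ∈ S | 2 ≤ weight (sigmaPolynomial φ a).graph m}.card ≤ Nat.card K + 1 := by
    rw [Nat.card_eq_fintype_card]
    exact card_le_of_two_le_weight hn ha fun m hm => (Finset.mem_filter.1 hm).2
  have hsum := sum_pow_add_le (w := weight (sigmaPolynomial φ a).graph) Nat.card_pos
    (fun m _ => weight_graph_le_three hn ha m)
    (fun m _ k _ hmk => (weight_add_weight_le _ hmk).trans_eq hrank) hheavy
  rw [natCard_eq_pow_finrank (K := K), hrank] at hcard
  omega

theorem four_le_finrank_of_slopes_eq (hn : finrank K L = 4) {a : Fin 4 → L}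
    (ha : a 1 ≠ 0 ∨ a 3 ≠ 0) {W : Submodule K (L × L)} (hW : ∀ v ∈ W, v.1 = 0 → v = 0)
    (h : slopes W = slopes (sigmaPolynomial φ a).graph) : 4 ≤ finrank K W := by
  by_contra! hlt
  let S := (slopes W).toFinite.toFinset
  have hS : (S : Set L) = slopes W := (slopes W).toFinite.coe_toFinset
  have hlower := le_card_slopes_mul_card hn ha (hS.trans h)
  have hupper := card_slopes_mul_card_le hW hS
  have hW3 : Nat.card W ≤ Nat.card K ^ 3 := by
    rw [natCard_eq_pow_finrank (K := K)]
    exact Nat.pow_le_pow_right Nat.card_pos (Nat.le_of_lt_succ hlt)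
  have hq : 2 * Nat.card K ^ 3 ≤ Nat.card K ^ 4 := by
    rw [pow_succ' _ 3]
    exact Nat.mul_le_mul_right _ Finite.one_lt_card
  have : 0 < Nat.card K := Nat.card_pos
  omega

end FiniteFields

section AlternatingTraceForm

variable (K L : Type*) [Field K] [Field L] [Algebra K L]

/-- The alternating form `((x, y), (u, v)) ↦ Tr (xv - yu)`, denoted `η'` in the statement. -/
noncomputable def alternatingTraceForm : LinearMap.BilinForm K (L × L) :=
  (Algebra.traceForm K L).compl₁₂ (.fst K L L) (.snd K L L) -
    (Algebra.traceForm K L).compl₁₂ (.snd K L L) (.fst K L L)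

variable {K L}

theorem alternatingTraceForm_apply (v w : L × L) :
    alternatingTraceForm K L v w = Algebra.trace K L (v.1 * w.2 - v.2 * w.1) := by
  simp [alternatingTraceForm]

theorem mem_orthogonal_alternatingTraceForm {U : Submodule K (L × L)} {w : L × L} :
    w ∈ (alternatingTraceForm K L).orthogonal U ↔
      ∀ s ∈ U, Algebra.trace K L (w.1 * s.2 - w.2 * s.1) = 0 := by
  refine forall₂_congr fun s _ => ?_
  rw [alternatingTraceForm_apply, ← neg_eq_zero, ← map_neg]
  ring_nf

theorem coe_orthogonal_alternatingTraceForm [Finite L] (U : Submodule K (L × L)) :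
    ((alternatingTraceForm K L).orthogonal U : Set (L × L)) =
      {w | ∀ s ∈ U, ∑ i ∈ Finset.range (finrank K L),
        (w.1 * s.2 - w.2 * s.1) ^ Nat.card K ^ i = 0} := by
  ext w
  refine mem_orthogonal_alternatingTraceForm.trans (forall₂_congr fun s _ => ?_)
  rw [← FiniteField.algebraMap_trace_eq_sum_pow, FaithfulSMul.algebraMap_eq_zero_iff]

theorem orthogonal_graph_sigmaPolynomial [FiniteDimensional K L] [Algebra.IsSeparable K L] {n : ℕ}
    [NeZero n] {σ : L ≃ₐ[K] L} (hσ : σ ^ n = 1) (a : Fin n → L) :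
    (alternatingTraceForm K L).orthogonal (sigmaPolynomial σ a).graph =
      (sigmaPolynomial σ (adjointCoeff σ a)).graph := by
  ext w
  have hform (y : L) : Algebra.trace K L (w.1 * sigmaPolynomial σ a y - w.2 * y) =
      Algebra.traceForm K L (sigmaPolynomial σ (adjointCoeff σ a) w.1 - w.2) y := by
    rw [map_sub, trace_mul_sigmaPolynomial hσ, ← map_sub, ← sub_mul, Algebra.traceForm_apply]
  rw [mem_orthogonal_alternatingTraceForm, LinearMap.mem_graph_iff, eq_comm, ← sub_eq_zero]
  constructor
  · intro h
    exact (traceForm_nondegenerate K L).1 _ fun y => (hform y).symm.trans (h (y, _) rfl)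
  · rintro h ⟨y, _⟩ (rfl : _ = sigmaPolynomial σ a y)
    rw [hform, h, map_zero, LinearMap.zero_apply]

end AlternatingTraceForm

section Shear

variable {L : Type*} [Field L]

/-- The linear automorphism `(x, y) ↦ (y - cx, -x)` of determinant `1`, which moves the line of
slope `c` to the line at infinity. -/
def shear (c : L) : (L × L) ≃ₗ[L] (L × L) where
  toFun w := (w.2 - c * w.1, -w.1)
  invFun w := (-w.2, w.1 - c * w.2)
  map_add' _ _ := by ext <;> simp <;> ring
  map_smul' _ _ := by ext <;> simp; ring
  left_inv _ := by ext <;> simp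
  right_inv _ := by ext <;> simp

theorem shear_apply (c : L) (w : L × L) : shear c w = (w.2 - c * w.1, -w.1) :=
  rfl

variable {K : Type*} [Field K] [Algebra K L] {c : L} {W : Submodule K (L × L)}

theorem exists_notMem_slopes [Finite L]
    (hW : finrank K W ≤ finrank K L) : ∃ c, c ∉ slopes W := by
  have : Finite K := .of_injective _ (algebraMap K L).injective
  have hcard : Nat.card W ≤ Nat.card L := by
    rw [natCard_eq_pow_finrank (K := K), natCard_eq_pow_finrank (K := K) (V := L)]
    exact Nat.pow_le_pow_right Nat.card_pos hW
  by_contra! h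
  choose v hvW hv₁ hv using fun c => mem_slopes.1 (h c)
  have hinj : Function.Injective fun c => (⟨v c, hvW c⟩ : W) := by
    intro c d hcd
    have hcd : v c = v d := congrArg Subtype.val hcd
    exact mul_right_cancel₀ (hv₁ c) (by rw [← hv, hcd, ← hv])
  obtain ⟨c, hc⟩ := (hinj.bijective_of_nat_card_le hcard).2 0
  exact hv₁ c (congrArg (fun w : W => (w : L × L).1) hc)

theorem eq_zero_of_mem_map_shear_of_fst_eq_zero (hc : c ∉ slopes W) {v : L × L}
    (hv : v ∈ W.map ((shear c).restrictScalars K).toLinearMap) (hv₁ : v.1 = 0) : v = 0 := by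
  obtain ⟨w, hw, rfl⟩ := hv
  have hw₂ : w.2 = c * w.1 := sub_eq_zero.1 hv₁
  have hw₁ : w.1 = 0 := by_contra fun h => hc (mem_slopes.2 ⟨w, hw, h, hw₂⟩)
  have hw₀ : w = 0 := Prod.ext hw₁ (by rw [hw₂, hw₁, mul_zero, Prod.snd_zero])
  rw [hw₀, map_zero]

theorem orthogonal_map_shear (c : L) (U : Submodule K (L × L)) :
    (alternatingTraceForm K L).orthogonal (U.map ((shear c).restrictScalars K).toLinearMap) =
      ((alternatingTraceForm K L).orthogonal U).map ((shear c).restrictScalars K).toLinearMap := by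
  have hform (v w : L × L) :
      alternatingTraceForm K L (shear c v) (shear c w) = alternatingTraceForm K L v w := by
    simp only [alternatingTraceForm_apply, shear_apply]
    ring_nf
  ext w
  obtain ⟨w, rfl⟩ := (shear c).surjective w
  rw [LinearMap.BilinForm.mem_orthogonal_iff]
  constructor
  · intro h
    exact ⟨w, fun u hu => hform u w ▸ h _ ⟨u, hu, rfl⟩, rfl⟩
  · rintro ⟨w', hw', hw⟩ _ ⟨u, hu, rfl⟩
    rw [← (shear c).injective hw]
    exact (hform u w').trans (hw' u hu)

end Shear

section LinSet

variable {L : Type} [Field L]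

theorem linSet_image (e : (L × L) ≃ₗ[L] (L × L)) (S : Set (L × L)) :
    linSet L (e '' S) = Submodule.map e.toLinearMap '' linSet L S := by
  ext X
  constructor
  · rintro ⟨_, ⟨u, hu, rfl⟩, hu₀, rfl⟩
    exact ⟨_, ⟨u, hu, e.map_ne_zero_iff.1 hu₀, rfl⟩, by simp [Submodule.map_span]⟩
  · rintro ⟨_, ⟨u, hu, hu₀, rfl⟩, rfl⟩
    exact ⟨e u, ⟨u, hu, rfl⟩, e.map_ne_zero_iff.2 hu₀, by simp [Submodule.map_span]⟩

theorem mem_slopes_iff_mem_linSet {K : Type*} [Field K] [Algebra K L] {W : Submodule K (L × L)}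
    {m : L} : m ∈ slopes W ↔ Submodule.span L {(1, m)} ∈ linSet L (W : Set (L × L)) := by
  rw [mem_slopes]
  constructor
  · rintro ⟨v, hvW, hv₁, hv⟩
    have hsmul : v = v.1 • (1, m) := Prod.ext (mul_one _).symm (hv.trans (mul_comm _ _))
    refine ⟨v, hvW, fun h => hv₁ (congrArg Prod.fst h), ?_⟩
    rw [hsmul, Submodule.span_singleton_smul_eq hv₁.isUnit]
  · rintro ⟨v, hvW, hv₀, hv⟩
    obtain ⟨t, rfl⟩ := Submodule.mem_span_singleton.1 (hv ▸ Submodule.mem_span_singleton_self v)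
    have ht : t ≠ 0 := fun h => hv₀ (by rw [h, zero_smul])
    exact ⟨_, hvW, by simpa using ht, by simp [mul_comm]⟩

end LinSet

section FiniteFields

open scoped Pointwise

section Fields

variable {K L : Type*} [Field K] [Field L] [Algebra K L]

theorem injective_fst_comp_subtype {W : Submodule K (L × L)} (hW : ∀ v ∈ W, v.1 = 0 → v = 0) :
    Function.Injective (LinearMap.fst K L L ∘ₗ W.subtype) :=
  (injective_iff_map_eq_zero _).2 fun v hv => Subtype.ext (hW v v.2 hv)

theorem map_shear_smul (c μ : L) (W : Submodule K (L × L)) :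
    (μ • W).map ((shear c).restrictScalars K).toLinearMap =
      μ • W.map ((shear c).restrictScalars K).toLinearMap := by
  ext v
  simp only [Submodule.mem_map, Submodule.mem_smul_pointwise_iff_exists]
  constructor
  · rintro ⟨_, ⟨w, hw, rfl⟩, rfl⟩
    exact ⟨_, ⟨w, hw, rfl⟩, ((shear c).map_smul μ w).symm⟩
  · rintro ⟨_, ⟨w, hw, rfl⟩, rfl⟩
    exact ⟨_, ⟨w, hw, rfl⟩, (shear c).map_smul μ w⟩

theorem graph_sigmaPolynomial_twist {n : ℕ} (σ : L ≃ₐ[K] L) {l : L} (hl : l ≠ 0)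
    (a : Fin n → L) :
    (sigmaPolynomial σ (twist σ l a)).graph = l⁻¹ • (sigmaPolynomial σ a).graph := by
  ext ⟨x, y⟩
  rw [LinearMap.mem_graph_iff, sigmaPolynomial_twist, Submodule.mem_smul_pointwise_iff_exists]
  constructor
  · intro h
    exact ⟨(l * x, sigmaPolynomial σ a (l * x)), rfl,
      Prod.ext (inv_mul_cancel_left₀ hl x) h.symm⟩
  · rintro ⟨⟨u, _⟩, (rfl : _ = sigmaPolynomial σ a u), h⟩
    obtain ⟨rfl, rfl⟩ := Prod.ext_iff.1 h
    simp [mul_inv_cancel_left₀ hl]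

end Fields

theorem exists_intermediateField_finrank_eq {K L : Type*} [Field K] [Field L] [Finite L]
    [Algebra K L] {d : ℕ} (hd : d ∣ finrank K L) :
    ∃ E : IntermediateField K L, finrank K E = d := by
  have : Finite K := .of_injective _ (algebraMap K L).injective
  have : NeZero d := ⟨(Nat.pos_of_dvd_of_pos hd finrank_pos).ne'⟩
  have := Fact.mk (CharP.char_prime_of_ne_zero K (CharP.char_ne_zero_of_finite K (ringChar K)))
  have hext := FiniteField.finrank_extension K (ringChar K) d
  obtain ⟨i⟩ := FiniteField.nonempty_algHom_of_finrank_dvd (hext.symm ▸ hd :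
    finrank K (FiniteField.Extension K (ringChar K) d) ∣ finrank K L)
  exact ⟨i.fieldRange, (AlgEquiv.ofInjectiveField i).toLinearEquiv.finrank_eq.symm.trans hext⟩

section LinSet

variable {K : Type*} {L : Type} [Field K] [Field L] [Algebra K L] {U V : Submodule K (L × L)}

theorem slopes_eq_of_linSet_eq (h : linSet L (V : Set (L × L)) = linSet L U) :
    slopes V = slopes U := by
  ext m
  rw [mem_slopes_iff_mem_linSet, mem_slopes_iff_mem_linSet, h]

theorem slopes_map_shear_eq_of_linSet_eq (c : L) (h : linSet L (V : Set (L × L)) = linSet L U) :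
    slopes (V.map ((shear c).restrictScalars K).toLinearMap) =
      slopes (U.map ((shear c).restrictScalars K).toLinearMap) := by
  have himage (W : Submodule K (L × L)) :
      (W.map ((shear c).restrictScalars K).toLinearMap : Set (L × L)) = shear c '' W := rfl
  apply slopes_eq_of_linSet_eq
  rw [himage, himage, linSet_image, linSet_image, h]

end LinSet

section Fintype

variable {K L : Type*} [Field K] [Fintype K] [Field L] [Finite L] [Algebra K L]

local notation "φ" => FiniteField.frobeniusAlgEquivOfAlgebraic K L

theorem exists_map_shear_eq_graph (hn : finrank K L = 4) {c : L} {W : Submodule K (L × L)}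
    (hW : finrank K W = 4) (hc : c ∉ slopes W) : ∃ a : Fin 4 → L,
      W.map ((shear c).restrictScalars K).toLinearMap = (sigmaPolynomial φ a).graph := by
  let G := W.map ((shear c).restrictScalars K).toLinearMap
  have hinj := injective_fst_comp_subtype fun v (hv : v ∈ G) =>
    eq_zero_of_mem_map_shear_of_fst_eq_zero hc hv
  have hG : finrank K G = finrank K L := by
    rw [hn, ← hW]
    exact LinearEquiv.finrank_map_eq ((shear c).restrictScalars K) W
  have hsurj := (LinearMap.injective_iff_surjective_of_finrank_eq_finrank hG).1 hinj
  obtain ⟨f, hf⟩ := Submodule.exists_eq_graph ⟨hinj, hsurj⟩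
  obtain ⟨a, rfl⟩ := sigmaPolynomial_surjective
    ((FiniteField.orderOf_frobeniusAlgEquivOfAlgebraic K L).trans hn) hn f
  exact ⟨a, hf⟩

theorem graph_sigmaPolynomial_smul_mem {a : Fin 4 → L} (ha₁ : a 1 = 0) (ha₃ : a 3 = 0) {t : L}
    (ht : φ (φ t) = t) {v : L × L} (hv : v ∈ (sigmaPolynomial φ a).graph) :
    t • v ∈ (sigmaPolynomial φ a).graph := by
  rw [LinearMap.mem_graph_iff, sigmaPolynomial_apply, Fin.sum_univ_four] at hv ⊢
  have h₂ (x : L) : (φ ^ 2) x = φ (φ x) := rfl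
  simp only [ha₁, ha₃, Fin.val_zero, Fin.val_two, pow_zero, AlgEquiv.one_apply, h₂, zero_mul,
    add_zero, Prod.smul_fst, Prod.smul_snd, smul_eq_mul, map_mul, ht] at hv ⊢
  rw [hv]
  ring

end Fintype

variable {K : Type*} {L : Type} [Field K] [Field L] [Finite L] [Algebra K L]
  {U V : Submodule K (L × L)}

theorem coeff_one_ne_zero_or_coeff_three_ne_zero [Fintype K] (hn : finrank K L = 4)
    (hU : ∀ E : IntermediateField K L, finrank K E = 2 →
      ∀ U' : Submodule E (L × L), (U' : Set (L × L)) ≠ U) {c : L} {a : Fin 4 → L}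
    (ha : U.map ((shear c).restrictScalars K).toLinearMap =
      (sigmaPolynomial (FiniteField.frobeniusAlgEquivOfAlgebraic K L) a).graph) :
    a 1 ≠ 0 ∨ a 3 ≠ 0 := by
  by_contra! ha₀
  obtain ⟨E, hE⟩ := exists_intermediateField_finrank_eq (K := K) (L := L) (d := 2) (by simp [hn])
  have hmem {u : L × L} : u ∈ U ↔
      shear c u ∈ (sigmaPolynomial (FiniteField.frobeniusAlgEquivOfAlgebraic K L) a).graph := by
    rw [← ha]
    exact ((shear c).injective.mem_set_image (s := (U : Set (L × L)))).symm
  have hsmul (t : E) {u : L × L} (hu : u ∈ U) : (t : L) • u ∈ U := by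
    have ht : ((t : L) ^ Fintype.card K) ^ Fintype.card K = t := by
      have := Fintype.ofFinite E
      rw [← pow_mul, ← sq, ← hE, ← card_eq_pow_finrank, ← SubmonoidClass.coe_pow,
        FiniteField.pow_card]
    rw [hmem, map_smul]
    exact graph_sigmaPolynomial_smul_mem ha₀.1 ha₀.2 ht (hmem.1 hu)
  exact hU E hE { U with smul_mem' := fun t _ => hsmul t } rfl

theorem finrank_eq_four_of_linSet_eq (hn : finrank K L = 4) (hU : finrank K U = 4)
    (hU₂ : ∀ E : IntermediateField K L, finrank K E = 2 →
      ∀ U' : Submodule E (L × L), (U' : Set (L × L)) ≠ U)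
    (h : linSet L (V : Set (L × L)) = linSet L U) : finrank K V = 4 := by
  have : Finite K := .of_injective _ (algebraMap K L).injective
  have := Fintype.ofFinite K
  obtain ⟨c, hc⟩ : ∃ c, c ∉ slopes U := exists_notMem_slopes (hU.trans hn.symm).le
  obtain ⟨a, ha⟩ := exists_map_shear_eq_graph hn hU hc
  let G := V.map ((shear c).restrictScalars K).toLinearMap
  have hG : ∀ v ∈ G, v.1 = 0 → v = 0 := fun v hv =>
    eq_zero_of_mem_map_shear_of_fst_eq_zero (slopes_eq_of_linSet_eq h ▸ hc) hv
  have hGV : finrank K G = finrank K V :=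
    LinearEquiv.finrank_map_eq ((shear c).restrictScalars K) V
  rw [← hGV]
  refine le_antisymm ?_ (four_le_finrank_of_slopes_eq hn
    (coeff_one_ne_zero_or_coeff_three_ne_zero hn hU₂ ha) hG
    (ha ▸ slopes_map_shear_eq_of_linSet_eq c h))
  rw [← hn]
  exact LinearMap.finrank_le_finrank_of_injective (injective_fst_comp_subtype hG)

theorem exists_eq_smul_or_eq_smul_orthogonal (hn : finrank K L = 4)
    (hU : finrank K U = 4) (hV : finrank K V = 4)
    (h : linSet L (V : Set (L × L)) = linSet L U) :
    ∃ μ : L, μ ≠ 0 ∧ (V = μ • U ∨ V = μ • (alternatingTraceForm K L).orthogonal U) := by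
  have : Finite K := .of_injective _ (algebraMap K L).injective
  have := Fintype.ofFinite K
  have hφ := (FiniteField.orderOf_frobeniusAlgEquivOfAlgebraic K L).trans hn
  obtain ⟨c, hc⟩ : ∃ c, c ∉ slopes U := exists_notMem_slopes (hU.trans hn.symm).le
  obtain ⟨a, ha⟩ := exists_map_shear_eq_graph hn hU hc
  obtain ⟨b, hb⟩ := exists_map_shear_eq_graph hn hV (slopes_eq_of_linSet_eq h ▸ hc)
  have hinj := Submodule.map_injective_of_injective ((shear c).restrictScalars K).injective
  have hslopes := slopes_map_shear_eq_of_linSet_eq c h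
  rw [ha, hb] at hslopes
  obtain ⟨l, hl, rfl⟩ | ⟨l, hl, rfl⟩ := exists_eq_twist_or_eq_twist_adjointCoeff hφ
    (principalMinorsEq_dicksonMatrix_of_slopes_eq hn hslopes.symm)
  · refine ⟨l⁻¹, inv_ne_zero hl, .inl (hinj ?_)⟩
    rw [map_shear_smul, ha, ← graph_sigmaPolynomial_twist _ hl, hb]
  · refine ⟨l⁻¹, inv_ne_zero hl, .inr (hinj ?_)⟩
    rw [map_shear_smul, ← orthogonal_map_shear, ha,
      orthogonal_graph_sigmaPolynomial (hφ ▸ pow_orderOf_eq_one _),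
      ← graph_sigmaPolynomial_twist _ hl, hb]

end FiniteFields

theorem stmt_9_general (q : ℕ)
    (F : Type) [Field F] [Fintype F] (hF : Fintype.card F = q ^ 4)
    (Fq : Subfield F) (hFq : Nat.card Fq = q)
    (U : Submodule Fq (F × F)) (hU : Module.finrank Fq U = 4)
    (hmax : ∀ E : Subfield F, Nat.card E = q ^ 2 →
      ∀ U' : Submodule E (F × F), (U' : Set (F × F)) ≠ (U : Set (F × F)))
    (V : Submodule Fq (F × F))
    (hV : linSet F (V : Set (F × F)) = linSet F (U : Set (F × F))) :
    ∃ μ : F, μ ≠ 0 ∧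
      ((V : Set (F × F)) = (fun w : F × F => μ • w) '' (U : Set (F × F)) ∨
        (V : Set (F × F)) = (fun w : F × F => μ • w) ''
          {w : F × F | ∀ s ∈ U,
            (∑ i ∈ Finset.range 4, (w.1 * s.2 - w.2 * s.1) ^ q ^ i) = 0}) := by
  subst hFq
  have hn : finrank Fq F = 4 := by
    refine Nat.pow_right_injective (Finite.one_lt_card : 2 ≤ Nat.card Fq) ?_
    simp only [← natCard_eq_pow_finrank, Nat.card_eq_fintype_card, hF]
  have hE (E : IntermediateField Fq F) (hE : finrank Fq E = 2) :
      Nat.card E = Nat.card Fq ^ 2 := by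
    rw [← hE, natCard_eq_pow_finrank (K := Fq)]
  have hV₄ : finrank Fq V = 4 :=
    finrank_eq_four_of_linSet_eq hn hU (fun E h => hmax E.toSubfield (hE E h)) hV
  obtain ⟨μ, hμ, rfl | rfl⟩ := exists_eq_smul_or_eq_smul_orthogonal hn hU hV₄ hV
  · exact ⟨μ, hμ, .inl rfl⟩
  · refine ⟨μ, hμ, .inr ?_⟩
    rw [← hn, ← coe_orthogonal_alternatingTraceForm]
    rfl

/-- if `U` is an `F_q`-subspace of `W = F_{q^4} × F_{q^4}` of rank 4 whose
linear set has maximum field of linearity `F_q`, and `V` is an `F_q`-subspace with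
`L_V = L_U`, then `V = μU` or `V = μ(U^{⊥'})` for some nonzero `μ`, where `⊥'` is taken
with respect to `η'((x,y),(u,v)) = Tr_{q^4/q}(xv - yu)`. -/
theorem stmt_9 (p e q : ℕ) (hp : p.Prime) (he : 0 < e) (hq : q = p ^ e)
    (F : Type) [Field F] [Fintype F] (hF : Fintype.card F = q ^ 4)
    (Fq : Subfield F) (hFq : Nat.card Fq = q)
    (U : Submodule Fq (F × F)) (hU : Module.finrank Fq U = 4)
    (hmax : ∀ m : ℕ, m ∣ 4 → 1 < m → ∀ E : Subfield F, Nat.card E = q ^ m →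
      ∀ U' : Submodule E (F × F), linSet F (U' : Set (F × F)) ≠ linSet F (U : Set (F × F)))
    (V : Submodule Fq (F × F))
    (hV : linSet F (V : Set (F × F)) = linSet F (U : Set (F × F))) :
    ∃ μ : F, μ ≠ 0 ∧
      ((V : Set (F × F)) = (fun w : F × F => μ • w) '' (U : Set (F × F)) ∨
        (V : Set (F × F)) = (fun w : F × F => μ • w) ''
          {w : F × F | ∀ s ∈ U,
            (∑ i ∈ Finset.range 4, (w.1 * s.2 - w.2 * s.1) ^ q ^ i) = 0}) :=
  stmt_9_general q F hF Fq hFq U hU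
    (fun E hE U' h => hmax 2 (by norm_num) (by norm_num) E hE U' (by rw [h])) V hV
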